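/- Let N ≥ 2, s ∈ (0,1), let B ⊂ ℝ^N be an open ball centered at the origin, and let u be a continuous first nontrivial eigenfunction on B (i.e. a continuous eigenfunction associated to μ₁^{(s)}(B)). Then for every e ∈ 𝕊^{N−1}, either P_e u = u in ℝ^N or P_e u = u∘σ_e in ℝ^N; consequently, u is foliated Schwarz symmetric with respect to some p ∈ 𝕊^{N−1}. -/

import Mathlib

open MeasureTheory Filter Topology Bornology Set
open scoped ENNReal NNReal

noncomputable section

namespace FracNeumann

abbrev Euc (N : ℕ) : Type := EuclideanSpace ℝ (Fin N)

/-- The kernel weight `|x - y| ^ (N + 2s)`. -/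
def kern (N : ℕ) (s : ℝ) (x y : Euc N) : ℝ := ‖x - y‖ ^ ((N : ℝ) + 2 * s)

/-- The region `ℝ^{2N} \ (Ω^c × Ω^c)`, where `Ω^c := ℝ^N \ closure Ω`. -/
def reg (N : ℕ) (Ω : Set (Euc N)) : Set (Euc N × Euc N) :=
  {q | q.1 ∈ closure Ω ∨ q.2 ∈ closure Ω}

/-- The squared seminorm `[u]_{H^s_{Ω,0}}²`, as an extended real number. -/
def semiSq (N : ℕ) (s : ℝ) (Ω : Set (Euc N)) (u : Euc N → ℝ) : ℝ≥0∞ :=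
  ∫⁻ q in reg N Ω, ENNReal.ofReal ((u q.1 - u q.2) ^ 2 / kern N s q.1 q.2)

/-- `∫_Ω u²`, as an extended real number. -/
def l2sq (N : ℕ) (Ω : Set (Euc N)) (u : Euc N → ℝ) : ℝ≥0∞ :=
  ∫⁻ x in Ω, ENNReal.ofReal ((u x) ^ 2)

/-- Membership in `H^s_{Ω,0}`. -/
def memHs (N : ℕ) (s : ℝ) (Ω : Set (Euc N)) (u : Euc N → ℝ) : Prop :=
  Measurable u ∧ l2sq N Ω u < ⊤ ∧ semiSq N s Ω u < ⊤

/-- The squared Gagliardo seminorm `[u]_{H^s(Ω)}²`. -/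
def semiSqOn (N : ℕ) (s : ℝ) (Ω : Set (Euc N)) (u : Euc N → ℝ) : ℝ≥0∞ :=
  ∫⁻ q in Ω ×ˢ Ω, ENNReal.ofReal ((u q.1 - u q.2) ^ 2 / kern N s q.1 q.2)

/-- Membership in `H^s(Ω)` (for functions defined on all of `ℝ^N`). -/
def memHsOn (N : ℕ) (s : ℝ) (Ω : Set (Euc N)) (u : Euc N → ℝ) : Prop :=
  Measurable u ∧ l2sq N Ω u < ⊤ ∧ semiSqOn N s Ω u < ⊤

/-- The normalizing constant `c_{N,s}` of the fractional Laplacian. -/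
def cNs (N : ℕ) (s : ℝ) : ℝ :=
  (4 : ℝ) ^ s * s * Real.Gamma ((N : ℝ) / 2 + s) /
    (Real.pi ^ ((N : ℝ) / 2) * Real.Gamma (1 - s))

/-- The nonlocal Neumann derivative `𝒩_s u`. -/
def Nneu (N : ℕ) (s : ℝ) (Ω : Set (Euc N)) (u : Euc N → ℝ) (x : Euc N) : ℝ :=
  cNs N s * ∫ y in Ω, (u x - u y) / kern N s x y

/-- Membership in `H̃^s_{Ω,0}`: members of `H^s_{Ω,0}` with `𝒩_s u = 0` a.e. in `Ω^c`. -/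
def memHsTilde (N : ℕ) (s : ℝ) (Ω : Set (Euc N)) (u : Euc N → ℝ) : Prop :=
  memHs N s Ω u ∧ ∀ᵐ x ∂(volume.restrict (closure Ω)ᶜ), Nneu N s Ω u x = 0

/-- The first nontrivial Neumann eigenvalue `μ₁^{(s)}(Ω)`. -/
def mu1 (N : ℕ) (s : ℝ) (Ω : Set (Euc N)) : ℝ :=
  sInf {t : ℝ | ∃ u : Euc N → ℝ, memHs N s Ω u ∧ (∫ x in Ω, (u x) ^ 2) = 1 ∧
    (∫ x in Ω, u x) = 0 ∧ t = cNs N s / 2 * (semiSq N s Ω u).toReal}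

/-- The bilinear form (without the constant). -/
def bform (N : ℕ) (s : ℝ) (Ω : Set (Euc N)) (u v : Euc N → ℝ) : ℝ :=
  ∫ q in reg N Ω, (u q.1 - u q.2) * (v q.1 - v q.2) / kern N s q.1 q.2

/-- First nontrivial eigenfunction: weak solution associated to `μ₁^{(s)}(Ω)`. -/
def IsFirstEigen (N : ℕ) (s : ℝ) (Ω : Set (Euc N)) (u : Euc N → ℝ) : Prop :=
  memHs N s Ω u ∧ ¬ (u =ᵐ[volume.restrict Ω] 0) ∧ (∫ x in Ω, u x) = 0 ∧
    ∀ v : Euc N → ℝ, memHs N s Ω v →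
      cNs N s / 2 * bform N s Ω u v = mu1 N s Ω * ∫ x in Ω, u x * v x

/-- Reflection `σ_e(x) = x - 2(x·e)e` across the hyperplane `{x·e = 0}`. -/
def reflect (N : ℕ) (e x : Euc N) : Euc N := x - (2 * (inner ℝ x e : ℝ)) • e

/-- The polarization `P_e u` with respect to the hyperplane `{x·e = 0}`. -/
def polarize (N : ℕ) (e : Euc N) (u : Euc N → ℝ) (x : Euc N) : ℝ :=
  if 0 ≤ (inner ℝ x e : ℝ) then min (u x) (u (reflect N e x))
  else max (u x) (u (reflect N e x))

/-- Foliated Schwarz symmetry with respect to `p`. -/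
def FoliatedSchwarz (N : ℕ) (p : Euc N) (u : Euc N → ℝ) : Prop :=
  ∃ uh : ℝ → ℝ → ℝ, (∀ r : ℝ, AntitoneOn (uh r) (Icc 0 Real.pi)) ∧
    ∀ x : Euc N, x ≠ 0 → u x = uh ‖x‖ (Real.arccos ((inner ℝ x p : ℝ) / ‖x‖))

/-- Radial symmetry (pointwise). -/
def Radial (N : ℕ) (u : Euc N → ℝ) : Prop := ∃ f : ℝ → ℝ, ∀ x, u x = f ‖x‖

/-- Radial symmetry (a.e.). -/
def RadialAE (N : ℕ) (u : Euc N → ℝ) : Prop :=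
  ∃ f : ℝ → ℝ, ∀ᵐ x : Euc N ∂volume, u x = f ‖x‖

/-- The set `{x ∈ Ω : u x ≠ 0}` has exactly two connected components. -/
def TwoNodal (N : ℕ) (Ω : Set (Euc N)) (u : Euc N → ℝ) : Prop :=
  Nat.card (ConnectedComponents {x : Euc N // x ∈ Ω ∧ u x ≠ 0}) = 2

/-- Bounded Lipschitz domain: open, bounded, connected, and near every boundary point the set
is the region above the graph of a Lipschitz function in some direction `e`. -/
def IsLipschitzDomain (N : ℕ) (Ω : Set (Euc N)) : Prop :=
  IsOpen Ω ∧ IsBounded Ω ∧ IsConnected Ω ∧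
    ∀ x ∈ frontier Ω, ∃ e : Euc N, ‖e‖ = 1 ∧ ∃ r : ℝ, 0 < r ∧
      ∃ (L : NNReal) (f : Euc N → ℝ), LipschitzWith L f ∧
        ∀ y ∈ Metric.ball x r,
          (y ∈ Ω ↔ f (y - ((inner ℝ y e : ℝ)) • e) < (inner ℝ y e : ℝ))

/-- `g` is a weak gradient of `u` in `Ω`, square-integrable on `Ω`. -/
def IsWeakGradient (N : ℕ) (Ω : Set (Euc N)) (u : Euc N → ℝ) (g : Euc N → Euc N) : Prop :=
  Measurable g ∧ (∫⁻ x in Ω, ENNReal.ofReal (‖g x‖ ^ 2)) < ⊤ ∧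
    ∀ φ : Euc N → ℝ, ContDiff ℝ (⊤ : ℕ∞) φ → HasCompactSupport φ → tsupport φ ⊆ Ω →
      ∀ i : Fin N, (∫ x in Ω, u x * fderiv ℝ φ x (EuclideanSpace.single i 1)) =
        - ∫ x in Ω, g x i * φ x

/-- Membership in `H¹(Ω)`. -/
def memH1 (N : ℕ) (Ω : Set (Euc N)) (u : Euc N → ℝ) : Prop :=
  Measurable u ∧ l2sq N Ω u < ⊤ ∧ ∃ g, IsWeakGradient N Ω u g

/-- `∫_Ω |∇u|²`, as an extended real number. -/
def gradSq (N : ℕ) (Ω : Set (Euc N)) (u : Euc N → ℝ) : ℝ≥0∞ :=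
  ⨅ (g : Euc N → Euc N) (_ : IsWeakGradient N Ω u g), ∫⁻ x in Ω, ENNReal.ofReal (‖g x‖ ^ 2)

/-- Rayleigh quotient for the fractional Neumann problem. -/
def rayleighS (N : ℕ) (s : ℝ) (Ω : Set (Euc N)) (u : Euc N → ℝ) : ℝ≥0∞ :=
  ENNReal.ofReal (cNs N s / 2) * semiSq N s Ω u / l2sq N Ω u

/-- Rayleigh quotient for the local Neumann problem. -/
def rayleigh1 (N : ℕ) (Ω : Set (Euc N)) (u : Euc N → ℝ) : ℝ≥0∞ :=
  gradSq N Ω u / l2sq N Ω u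

/-- The min-max value `μ_n^{(s)}(Ω)` over `n`-dimensional subspaces of `H^s_{Ω,0} ∩ L²₀(Ω)`. -/
def muNs (N : ℕ) (s : ℝ) (Ω : Set (Euc N)) (n : ℕ) : ℝ≥0∞ :=
  ⨅ (A : Submodule ℝ (Euc N → ℝ)) (_ : Module.finrank ℝ A = n ∧
      (∀ u ∈ A, memHs N s Ω u ∧ (∫ x in Ω, u x) = 0) ∧
      (∀ u ∈ A, u =ᵐ[(volume : Measure (Euc N))] 0 → u = 0)),
    ⨆ (u : Euc N → ℝ) (_ : u ∈ A ∧ u ≠ 0), rayleighS N s Ω u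

/-- The min-max value over `n`-dimensional subspaces of `H̃^s_{Ω,0} ∩ L²₀(Ω)`. -/
def muNsTilde (N : ℕ) (s : ℝ) (Ω : Set (Euc N)) (n : ℕ) : ℝ≥0∞ :=
  ⨅ (A : Submodule ℝ (Euc N → ℝ)) (_ : Module.finrank ℝ A = n ∧
      (∀ u ∈ A, memHsTilde N s Ω u ∧ (∫ x in Ω, u x) = 0) ∧
      (∀ u ∈ A, u =ᵐ[(volume : Measure (Euc N))] 0 → u = 0)),
    ⨆ (u : Euc N → ℝ) (_ : u ∈ A ∧ u ≠ 0), rayleighS N s Ω u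

/-- The min-max value `μ_n^{(1)}(Ω)` over `n`-dimensional subspaces of `H¹(Ω) ∩ L²₀(Ω)`. -/
def muN1 (N : ℕ) (Ω : Set (Euc N)) (n : ℕ) : ℝ≥0∞ :=
  ⨅ (A : Submodule ℝ (Euc N → ℝ)) (_ : Module.finrank ℝ A = n ∧
      (∀ u ∈ A, memH1 N Ω u ∧ (∫ x in Ω, u x) = 0) ∧
      (∀ u ∈ A, u =ᵐ[volume.restrict Ω] 0 → u = 0)),
    ⨆ (u : Euc N → ℝ) (_ : u ∈ A ∧ u ≠ 0), rayleigh1 N Ω u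

/-- `μ_n^{(s)}(Ω)` including `μ₀^{(s)}(Ω) := 0`. -/
def muNsFull (N : ℕ) (s : ℝ) (Ω : Set (Euc N)) (n : ℕ) : ℝ≥0∞ :=
  if n = 0 then 0 else muNs N s Ω n

/-- `μ_n^{(1)}(Ω)` including `μ₀^{(1)}(Ω) := 0`. -/
def muN1Full (N : ℕ) (Ω : Set (Euc N)) (n : ℕ) : ℝ≥0∞ :=
  if n = 0 then 0 else muN1 N Ω n

/-- The squared `H^s_{Ω,0}`-seminorm of the `s`-minimal extension of `u`:
the minimal value of `[v]²` over `v ∈ H^s_{Ω,0}` with `v = u` a.e. in `Ω`. -/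
def minExtSemiSq (N : ℕ) (s : ℝ) (Ω : Set (Euc N)) (u : Euc N → ℝ) : ℝ≥0∞ :=
  ⨅ (v : Euc N → ℝ) (_ : memHs N s Ω v ∧ v =ᵐ[volume.restrict Ω] u), semiSq N s Ω v

/-- `ω_{N-1}`: volume of the unit ball of `ℝ^{N-1}`. -/
def omegaPrev (N : ℕ) : ℝ := (volume (Metric.ball (0 : Euc (N - 1)) 1)).toReal

/-- Membership in `L²₀(Ω)`. -/
def memL20 (N : ℕ) (Ω : Set (Euc N)) (u : Euc N → ℝ) : Prop :=
  Measurable u ∧ l2sq N Ω u < ⊤ ∧ (∫ x in Ω, u x) = 0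

/-- The functional `F_s` (value `+∞` outside `H^s(Ω)`). -/
def Fs (N : ℕ) (s : ℝ) (Ω : Set (Euc N)) (u : Euc N → ℝ) : ℝ≥0∞ :=
  ENNReal.ofReal (1 - s) * minExtSemiSq N s Ω u

/-- The functional `F₁` (value `+∞` outside `H¹(Ω)`). -/
def F1 (N : ℕ) (Ω : Set (Euc N)) (u : Euc N → ℝ) : ℝ≥0∞ :=
  ENNReal.ofReal (omegaPrev N / (2 * N)) * gradSq N Ω u

end FracNeumann
namespace FracNeumann

/-!
Polarization preserves the mean and the `L²` norm over a reflection-invariant set and, by a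
two-point rearrangement inequality on the orbit of a pair `(x, y)` under reflecting either variable,
does not increase the energy. By the variational characterization of `μ₁`, the polarization of a
first eigenfunction `u` therefore has the same energy as `u`, so equality holds in the rearrangement
inequality almost everywhere. By continuity, `u - u ∘ σ_e` then cannot be positive at one point of
the open half-space `x · e > 0` and negative at another if one of the two points lies in `Ω`. This
settles the case in which `u - u ∘ σ_e` is nonzero somewhere in `Ω`. If it vanishes on `Ω`, the weak
equation tested with it shows that its energy is zero, so it vanishes everywhere.

The axis of symmetry is the direction of a weighted first moment `m` of `arctan ∘ u`: the sign of
`m · e` decides between the two alternatives for `e`, and two points of equal norm are exchanged by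
the reflection in the direction of their difference.
-/

section Integration

variable {α : Type*} [MeasurableSpace α] {μ : Measure α}

lemma lintegral_ofReal_sq_lt_top_iff_memLp {f : α → ℝ} (hf : AEStronglyMeasurable f μ) :
    ∫⁻ x, ENNReal.ofReal (f x ^ 2) ∂μ < ⊤ ↔ MemLp f 2 μ := by
  rw [memLp_two_iff_integrable_sq hf, lt_top_iff_ne_top]
  exact lintegral_ofReal_ne_top_iff_integrable (hf.pow 2) (ae_of_all _ fun _ => sq_nonneg _)

lemma two_mul_integral_eq_integral_add_comp {T : α → α} (hT : MeasurePreserving T μ μ)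
    (hTe : MeasurableEmbedding T) {f : α → ℝ} (hf : Integrable f μ) :
    2 * ∫ x, f x ∂μ = ∫ x, (f x + f (T x)) ∂μ := by
  have hfT : Integrable (fun x => f (T x)) μ := (hT.integrable_comp_emb hTe).2 hf
  rw [integral_add hf hfT, hT.integral_comp hTe, two_mul]

lemma exists_mem_of_ae_restrict_of_isOpen [TopologicalSpace α] [OpensMeasurableSpace α]
    [μ.IsOpenPosMeasure] {U S : Set α} (hU : IsOpen U) (hne : U.Nonempty) (hUS : U ⊆ S)
    {p : α → Prop} (hp : ∀ᵐ x ∂μ.restrict S, p x) : ∃ x ∈ U, p x := by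
  have : NeBot (ae (μ.restrict U)) := by
    rw [ae_neBot, Ne, Measure.restrict_eq_zero]
    exact (hU.measure_pos μ hne).ne'
  exact ((ae_restrict_mem hU.measurableSet).and
    (ae_restrict_of_ae_restrict_of_subset hUS hp)).exists

end Integration

section Reflection

variable {N : ℕ} {e : Euc N}

lemma reflect_eq_reflection (he : ‖e‖ = 1) : reflect N e = (ℝ ∙ e)ᗮ.reflection := by
  ext1 x
  rw [Submodule.reflection_orthogonal_apply, Submodule.reflection_singleton_apply, reflect, he,
    real_inner_comm]
  simp only [RCLike.ofReal_real_eq_id, id_eq, one_pow, div_one]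
  module

lemma reflect_reflect (he : ‖e‖ = 1) (x : Euc N) : reflect N e (reflect N e x) = x := by
  simp only [reflect_eq_reflection he, Submodule.reflection_reflection]

lemma reflect_of_inner_eq_zero {x : Euc N} (h : inner ℝ x e = 0) : reflect N e x = x := by
  simp [reflect, h]

lemma inner_reflect (he : ‖e‖ = 1) (x : Euc N) : inner ℝ (reflect N e x) e = -inner ℝ x e := by
  rw [reflect, inner_sub_left, real_inner_smul_left, real_inner_self_eq_norm_sq, he]
  ring

lemma norm_reflect (he : ‖e‖ = 1) (x : Euc N) : ‖reflect N e x‖ = ‖x‖ := by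
  rw [reflect_eq_reflection he, LinearIsometryEquiv.norm_map]

lemma norm_reflect_sub_reflect (he : ‖e‖ = 1) (x y : Euc N) :
    ‖reflect N e x - reflect N e y‖ = ‖x - y‖ := by
  rw [reflect_eq_reflection he, ← map_sub, LinearIsometryEquiv.norm_map]

lemma norm_sub_reflect_sq (he : ‖e‖ = 1) (x y : Euc N) :
    ‖x - reflect N e y‖ ^ 2 = ‖x - y‖ ^ 2 + 4 * inner ℝ x e * inner ℝ y e := by
  have hxy : x - reflect N e y = (x - y) + (2 * inner ℝ y e : ℝ) • e := by
    rw [reflect]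
    module
  rw [hxy, norm_add_sq_real, norm_smul, he, real_inner_smul_right, inner_sub_left, mul_one,
    Real.norm_eq_abs, sq_abs]
  ring

lemma reflect_normalized_sub {x y : Euc N} (hxy : ‖x‖ = ‖y‖) (hne : x ≠ y) :
    reflect N (‖x - y‖⁻¹ • (x - y)) x = y := by
  have hpos : ‖x - y‖ ≠ 0 := norm_ne_zero_iff.2 (sub_ne_zero.2 hne)
  have hinner : 2 * inner ℝ x (x - y) = ‖x - y‖ ^ 2 := by
    rw [norm_sub_sq_real, inner_sub_right, real_inner_self_eq_norm_sq, ← hxy]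
    ring
  have hcoeff : 2 * (‖x - y‖⁻¹ * inner ℝ x (x - y)) * ‖x - y‖⁻¹ = 1 := by
    field_simp
    linarith
  rw [reflect, real_inner_smul_right, smul_smul, hcoeff, one_smul, sub_sub_cancel]

lemma continuous_reflect (e : Euc N) : Continuous (reflect N e) := by
  unfold reflect
  fun_prop

lemma measurableEmbedding_reflect (he : ‖e‖ = 1) : MeasurableEmbedding (reflect N e) := by
  rw [reflect_eq_reflection he]
  exact (ℝ ∙ e)ᗮ.reflection.toHomeomorph.measurableEmbedding

lemma measurePreserving_reflect (he : ‖e‖ = 1) : MeasurePreserving (reflect N e) := by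
  rw [reflect_eq_reflection he]
  exact LinearIsometryEquiv.measurePreserving _

lemma measurePreserving_reflect_restrict (he : ‖e‖ = 1) {Ω : Set (Euc N)}
    (hΩ : reflect N e ⁻¹' Ω = Ω) :
    MeasurePreserving (reflect N e) (volume.restrict Ω) (volume.restrict Ω) := by
  simpa only [hΩ] using
    (measurePreserving_reflect he).restrict_preimage_emb (measurableEmbedding_reflect he) Ω

lemma preimage_reflect_closure (he : ‖e‖ = 1) {Ω : Set (Euc N)} (hΩ : reflect N e ⁻¹' Ω = Ω) :
    reflect N e ⁻¹' closure Ω = closure Ω := by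
  rw [reflect_eq_reflection he] at hΩ ⊢
  exact ((ℝ ∙ e)ᗮ.reflection.toHomeomorph.preimage_closure Ω).trans (congrArg closure hΩ)

lemma preimage_reflect_eq_of_radial (he : ‖e‖ = 1) {Ω : Set (Euc N)}
    (hΩ : ∀ x ∈ Ω, ∀ y, ‖y‖ = ‖x‖ → y ∈ Ω) : reflect N e ⁻¹' Ω = Ω := by
  ext x
  exact ⟨fun hx => hΩ _ hx x (norm_reflect he x).symm, fun hx => hΩ x hx _ (norm_reflect he x)⟩

end Reflection

section Polarization

variable {N : ℕ} {e : Euc N} {u : Euc N → ℝ}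

lemma polarize_of_inner_nonneg {x : Euc N} (hx : 0 ≤ inner ℝ x e) :
    polarize N e u x = min (u x) (u (reflect N e x)) := if_pos hx

lemma polarize_reflect_of_inner_nonneg (he : ‖e‖ = 1) {x : Euc N} (hx : 0 ≤ inner ℝ x e) :
    polarize N e u (reflect N e x) = max (u x) (u (reflect N e x)) := by
  rcases hx.eq_or_lt with hx0 | hx0
  · rw [reflect_of_inner_eq_zero hx0.symm, polarize_of_inner_nonneg hx,
      reflect_of_inner_eq_zero hx0.symm, min_self, max_self]
  · have hneg : ¬ 0 ≤ inner ℝ (reflect N e x) e := by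
      rw [inner_reflect he]
      linarith
    rw [polarize, if_neg hneg, reflect_reflect he, max_comm]

lemma forall_of_forall_inner_nonneg (he : ‖e‖ = 1) {p : Euc N → Prop}
    (h : ∀ x, 0 ≤ inner ℝ x e → p x) (h' : ∀ x, 0 ≤ inner ℝ x e → p (reflect N e x))
    (x : Euc N) : p x := by
  rcases le_total 0 (inner ℝ x e) with hx | hx
  · exact h x hx
  · simpa only [reflect_reflect he] using
      h' (reflect N e x) (by rw [inner_reflect he]; linarith)

lemma polarize_eq_self_iff (he : ‖e‖ = 1) :
    (∀ x, polarize N e u x = u x) ↔ ∀ x, 0 ≤ inner ℝ x e → u x ≤ u (reflect N e x) := by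
  refine ⟨fun h x hx => ?_, fun h => forall_of_forall_inner_nonneg he (fun x hx => ?_)
    fun x hx => ?_⟩
  · rw [← h x, polarize_of_inner_nonneg hx]
    exact min_le_right _ _
  · rw [polarize_of_inner_nonneg hx, min_eq_left (h x hx)]
  · rw [polarize_reflect_of_inner_nonneg he hx, max_eq_right (h x hx)]

lemma polarize_eq_comp_reflect_iff (he : ‖e‖ = 1) :
    (∀ x, polarize N e u x = u (reflect N e x)) ↔
      ∀ x, 0 ≤ inner ℝ x e → u (reflect N e x) ≤ u x := by
  refine ⟨fun h x hx => ?_, fun h => forall_of_forall_inner_nonneg he (fun x hx => ?_)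
    fun x hx => ?_⟩
  · rw [← h x, polarize_of_inner_nonneg hx]
    exact min_le_left _ _
  · rw [polarize_of_inner_nonneg hx, min_eq_right (h x hx)]
  · rw [polarize_reflect_of_inner_nonneg he hx, max_eq_left (h x hx), reflect_reflect he]

lemma polarize_eq_or_swap (he : ‖e‖ = 1) (u : Euc N → ℝ) (x : Euc N) :
    (polarize N e u x = u x ∧ polarize N e u (reflect N e x) = u (reflect N e x)) ∨
      (polarize N e u x = u (reflect N e x) ∧ polarize N e u (reflect N e x) = u x) := by
  refine forall_of_forall_inner_nonneg he (p := fun x =>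
    (polarize N e u x = u x ∧ polarize N e u (reflect N e x) = u (reflect N e x)) ∨
      (polarize N e u x = u (reflect N e x) ∧ polarize N e u (reflect N e x) = u x))
    (fun x hx => ?_) (fun x hx => ?_) x <;>
  · simp only [reflect_reflect he, polarize_of_inner_nonneg hx,
      polarize_reflect_of_inner_nonneg he hx]
    rcases le_total (u x) (u (reflect N e x)) with h | h <;> simp [h]

lemma measurable_polarize (e : Euc N) (hu : Measurable u) : Measurable (polarize N e u) := by
  have hσ := (continuous_reflect e).measurable
  exact Measurable.ite (measurableSet_le measurable_const (by fun_prop))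
    (hu.min (hu.comp hσ)) (hu.max (hu.comp hσ))

lemma comp_polarize_add_comp_reflect (he : ‖e‖ = 1) (F : ℝ → ℝ) (x : Euc N) :
    F (polarize N e u x) + F (polarize N e u (reflect N e x)) =
      F (u x) + F (u (reflect N e x)) := by
  rcases polarize_eq_or_swap he u x with h | h <;> rw [h.1, h.2]
  exact add_comm _ _

lemma integrableOn_comp_polarize (he : ‖e‖ = 1) {Ω : Set (Euc N)} (hΩ : reflect N e ⁻¹' Ω = Ω)
    (hu : Measurable u) {F : ℝ → ℝ} (hF : Measurable F)
    (hFu : IntegrableOn (fun x => F (u x)) Ω) :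
    IntegrableOn (fun x => F (polarize N e u x)) Ω := by
  have hFσ : IntegrableOn (fun x => F (u (reflect N e x))) Ω :=
    ((measurePreserving_reflect_restrict he hΩ).integrable_comp_emb
      (measurableEmbedding_reflect he)).2 hFu
  refine (hFu.norm.add hFσ.norm).mono'
    (hF.comp (measurable_polarize e hu)).aestronglyMeasurable (ae_of_all _ fun x => ?_)
  rcases polarize_eq_or_swap he u x with h | h <;> simp [h.1]

lemma setIntegral_comp_polarize (he : ‖e‖ = 1) {Ω : Set (Euc N)} (hΩ : reflect N e ⁻¹' Ω = Ω)
    (hu : Measurable u) {F : ℝ → ℝ} (hF : Measurable F)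
    (hFu : IntegrableOn (fun x => F (u x)) Ω) :
    ∫ x in Ω, F (polarize N e u x) = ∫ x in Ω, F (u x) := by
  have hσ := measurePreserving_reflect_restrict he hΩ
  have hσe := measurableEmbedding_reflect he
  refine mul_left_cancel₀ (two_ne_zero (α := ℝ)) ?_
  rw [two_mul_integral_eq_integral_add_comp hσ hσe hFu, two_mul_integral_eq_integral_add_comp hσ hσe
    (integrableOn_comp_polarize he hΩ hu hF hFu)]
  simp only [comp_polarize_add_comp_reflect he]

end Polarization

section FoliatedSchwarz

variable {N : ℕ} {e p : Euc N} {u : Euc N → ℝ}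

lemma le_of_inner_le_of_forall_reflect_le
    (h : ∀ e : Euc N, ‖e‖ = 1 → 0 ≤ inner ℝ p e →
      ∀ x, 0 ≤ inner ℝ x e → u (reflect N e x) ≤ u x)
    {x y : Euc N} (hxy : ‖x‖ = ‖y‖) (hp : inner ℝ y p ≤ inner ℝ x p) : u y ≤ u x := by
  rcases eq_or_ne x y with rfl | hne
  · exact le_rfl
  have hpos : 0 < ‖x - y‖ := norm_pos_iff.2 (sub_ne_zero.2 hne)
  have hpe : 0 ≤ inner ℝ p (‖x - y‖⁻¹ • (x - y)) := by
    rw [real_inner_smul_right, inner_sub_right, real_inner_comm x, real_inner_comm y]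
    exact mul_nonneg (by positivity) (sub_nonneg.2 hp)
  have hxe : 0 ≤ inner ℝ x (‖x - y‖⁻¹ • (x - y)) := by
    have hcs : inner ℝ x y ≤ ‖x‖ * ‖x‖ := hxy ▸ real_inner_le_norm x y
    rw [real_inner_smul_right, inner_sub_right, real_inner_self_eq_norm_mul_norm]
    exact mul_nonneg (by positivity) (sub_nonneg.2 hcs)
  have hunit : ‖‖x - y‖⁻¹ • (x - y)‖ = 1 := by
    rw [norm_smul, norm_inv, norm_norm, inv_mul_cancel₀ hpos.ne']
  simpa only [reflect_normalized_sub hxy hne] using h _ hunit hpe x hxe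

lemma foliatedSchwarz_of_monotone_inner (hp : ‖p‖ = 1)
    (h : ∀ x y : Euc N, ‖x‖ = ‖y‖ → inner ℝ y p ≤ inner ℝ x p → u y ≤ u x) :
    FoliatedSchwarz N p u := by
  let cap (r θ : ℝ) : Set (Euc N) := {y | ‖y‖ = r ∧ inner ℝ y p ≤ r * Real.cos θ}
  have hbdd (r θ : ℝ) : BddAbove (u '' cap r θ) := by
    refine ⟨u (r • p), ?_⟩
    rintro _ ⟨y, ⟨rfl, -⟩, rfl⟩
    refine h _ _ (by rw [norm_smul, norm_norm, hp, mul_one]) ?_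
    rw [real_inner_smul_left, real_inner_self_eq_norm_mul_norm, hp, mul_one]
    simpa only [hp] using real_inner_le_norm y p
  refine ⟨fun r θ => sSup (u '' cap r θ), fun r θ hθ φ hφ hle => ?_, fun x _ => ?_⟩
  · rcases lt_or_ge r 0 with hr | hr
    · have hempty (θ : ℝ) : cap r θ = ∅ :=
        eq_empty_of_forall_notMem fun y hy => (norm_nonneg y).not_gt (hy.1 ▸ hr)
      simp only [hempty, le_refl]
    · have hmem : -(r • p) ∈ cap r φ := by
        refine ⟨by rw [norm_neg, norm_smul, hp, mul_one, Real.norm_of_nonneg hr], ?_⟩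
        rw [inner_neg_left, real_inner_smul_left, real_inner_self_eq_norm_sq, hp]
        nlinarith [Real.neg_one_le_cos φ]
      have hcos : Real.cos φ ≤ Real.cos θ := Real.cos_le_cos_of_nonneg_of_le_pi hθ.1 hφ.2 hle
      exact csSup_le_csSup (hbdd r θ) ⟨_, mem_image_of_mem u hmem⟩ <| image_mono fun y hy =>
        ⟨hy.1, hy.2.trans (mul_le_mul_of_nonneg_left hcos hr)⟩
  · have hcos : ‖x‖ * Real.cos (Real.arccos (inner ℝ x p / ‖x‖)) = inner ℝ x p := by
      have := InnerProductGeometry.cos_angle_mul_norm_mul_norm x p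
      rwa [InnerProductGeometry.angle, hp, mul_one, mul_comm] at this
    have hgreatest : IsGreatest (u '' cap ‖x‖ (Real.arccos (inner ℝ x p / ‖x‖))) (u x) := by
      refine ⟨⟨x, ⟨rfl, hcos.ge⟩, rfl⟩, ?_⟩
      rintro _ ⟨y, ⟨hy, hyp⟩, rfl⟩
      exact h x y hy.symm (hyp.trans_eq hcos)
    exact hgreatest.csSup_eq.symm

/-- The first moment of `arctan ∘ u` against a decaying radial weight: a substitute for the
center of mass of `u` which converges for every measurable `u` and determines the axis of
symmetry. -/
def truncatedMoment (N : ℕ) (u : Euc N → ℝ) : Euc N :=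
  ∫ x, ((1 + ‖x‖) ^ (-(N + 2 : ℝ)) * Real.arctan (u x)) • x

lemma integrable_truncatedMoment (hu : Measurable u) :
    Integrable fun x : Euc N => ((1 + ‖x‖) ^ (-(N + 2 : ℝ)) * Real.arctan (u x)) • x := by
  have hweight : Integrable fun x : Euc N => (1 + ‖x‖) ^ (-(N + 1 : ℝ)) :=
    integrable_one_add_norm (by simp)
  refine (hweight.const_mul (Real.pi / 2)).mono' (by fun_prop) (ae_of_all _ fun x => ?_)
  have hbase : 0 < 1 + ‖x‖ := by positivity
  have hpow : (1 + ‖x‖) ^ (-(N + 2 : ℝ)) * (1 + ‖x‖) = (1 + ‖x‖) ^ (-(N + 1 : ℝ)) := by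
    rw [← Real.rpow_add_one hbase.ne']
    ring_nf
  have harctan : |Real.arctan (u x)| ≤ Real.pi / 2 :=
    abs_le.2 ⟨(Real.neg_pi_div_two_lt_arctan _).le, (Real.arctan_lt_pi_div_two _).le⟩
  calc ‖((1 + ‖x‖) ^ (-(N + 2 : ℝ)) * Real.arctan (u x)) • x‖
      = |Real.arctan (u x)| * ((1 + ‖x‖) ^ (-(N + 2 : ℝ)) * ‖x‖) := by
        rw [norm_smul, norm_mul, Real.norm_of_nonneg (by positivity), Real.norm_eq_abs]
        ring
    _ ≤ Real.pi / 2 * ((1 + ‖x‖) ^ (-(N + 2 : ℝ)) * (1 + ‖x‖)) := by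
        gcongr
        linarith
    _ = Real.pi / 2 * (1 + ‖x‖) ^ (-(N + 1 : ℝ)) := by rw [hpow]

/-- The integrand of `2 * inner ℝ (truncatedMoment N u) e` after symmetrization under
`reflect N e`; it has a sign as soon as `u` is ordered with respect to that reflection. -/
def momentDensity (N : ℕ) (e : Euc N) (u : Euc N → ℝ) (x : Euc N) : ℝ :=
  (1 + ‖x‖) ^ (-(N + 2 : ℝ)) *
    ((Real.arctan (u x) - Real.arctan (u (reflect N e x))) * inner ℝ x e)

lemma continuous_momentDensity (e : Euc N) (hu : Continuous u) :
    Continuous (momentDensity N e u) := by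
  have hσ := continuous_reflect e
  have hweight : Continuous fun x : Euc N => (1 + ‖x‖) ^ (-(N + 2 : ℝ)) :=
    (by fun_prop : Continuous fun x : Euc N => 1 + ‖x‖).rpow_const
      fun x => Or.inl (by positivity)
  unfold momentDensity
  fun_prop

lemma integrable_momentDensity_and_integral_eq (he : ‖e‖ = 1) (hu : Measurable u) :
    Integrable (momentDensity N e u) ∧
      ∫ x, momentDensity N e u x = 2 * inner ℝ (truncatedMoment N u) e := by
  have hσ := measurePreserving_reflect he
  have hσe := measurableEmbedding_reflect he
  have hintegrable := integrable_truncatedMoment hu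
  let f (x : Euc N) : ℝ := inner ℝ e (((1 + ‖x‖) ^ (-(N + 2 : ℝ)) * Real.arctan (u x)) • x)
  have hf : Integrable f := hintegrable.const_inner e
  have hdens : momentDensity N e u = fun x => f x + f (reflect N e x) := by
    ext x
    simp only [f, momentDensity, real_inner_smul_right, norm_reflect he]
    rw [real_inner_comm x e, real_inner_comm (reflect N e x) e, inner_reflect he]
    ring
  rw [hdens]
  refine ⟨hf.add ((hσ.integrable_comp_emb hσe).2 hf), ?_⟩
  rw [← two_mul_integral_eq_integral_add_comp hσ hσe hf, integral_inner hintegrable,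
    real_inner_comm]
  rfl

lemma momentDensity_nonpos (he : ‖e‖ = 1) (h : ∀ x, polarize N e u x = u x) (x : Euc N) :
    momentDensity N e u x ≤ 0 := by
  rw [polarize_eq_self_iff he] at h
  have hle (x : Euc N) (hx : 0 ≤ inner ℝ x e) :
      Real.arctan (u x) ≤ Real.arctan (u (reflect N e x)) := Real.arctan_mono (h x hx)
  refine mul_nonpos_of_nonneg_of_nonpos (by positivity)
    (forall_of_forall_inner_nonneg he (p := fun x =>
      (Real.arctan (u x) - Real.arctan (u (reflect N e x))) * inner ℝ x e ≤ 0)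
      (fun x hx => ?_) (fun x hx => ?_) x)
  · exact mul_nonpos_of_nonpos_of_nonneg (sub_nonpos.2 (hle x hx)) hx
  · rw [reflect_reflect he, inner_reflect he]
    exact mul_nonpos_of_nonneg_of_nonpos (sub_nonneg.2 (hle x hx)) (neg_nonpos.2 hx)

lemma reflect_le_of_inner_truncatedMoment_nonneg (he : ‖e‖ = 1) (hu : Continuous u)
    (h : (∀ x, polarize N e u x = u x) ∨ ∀ x, polarize N e u x = u (reflect N e x))
    (hm : 0 ≤ inner ℝ (truncatedMoment N u) e) {x : Euc N} (hx : 0 ≤ inner ℝ x e) :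
    u (reflect N e x) ≤ u x := by
  rcases h with h | h
  swap
  · exact (polarize_eq_comp_reflect_iff he).1 h x hx
  rcases hx.eq_or_lt with hx0 | hxpos
  · rw [reflect_of_inner_eq_zero hx0.symm]
  obtain ⟨hintegrable, hintegral⟩ := integrable_momentDensity_and_integral_eq he hu.measurable
  have hnonneg : 0 ≤ -momentDensity N e u := fun x => neg_nonneg.2 (momentDensity_nonpos he h x)
  have hzero : ∫ x, (-momentDensity N e u) x = 0 := by
    refine le_antisymm ?_ (integral_nonneg hnonneg)
    simp only [Pi.neg_apply, integral_neg, hintegral]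
    linarith
  have hdens : -momentDensity N e u = 0 :=
    ((continuous_momentDensity e hu).neg.ae_eq_iff_eq volume continuous_zero).1
      ((integral_eq_zero_iff_of_nonneg hnonneg hintegrable.neg).1 hzero)
  have hweight : (1 + ‖x‖) ^ (-(N + 2 : ℝ)) ≠ 0 := by positivity
  have hdiff : Real.arctan (u x) - Real.arctan (u (reflect N e x)) = 0 :=
    (mul_eq_zero.1 ((mul_eq_zero.1 (neg_eq_zero.1 (congrFun hdens x))).resolve_left
      hweight)).resolve_right hxpos.ne'
  exact (Real.arctan_injective (sub_eq_zero.1 hdiff)).ge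

lemma exists_norm_eq_one_and_eq_norm_smul {E : Type*} [NormedAddCommGroup E] [NormedSpace ℝ E]
    [Nontrivial E] (m : E) : ∃ p : E, ‖p‖ = 1 ∧ m = ‖m‖ • p := by
  rcases eq_or_ne m 0 with rfl | hm
  · obtain ⟨p, hp⟩ := exists_norm_eq E zero_le_one
    exact ⟨p, hp, by rw [norm_zero, zero_smul]⟩
  · have hnorm : ‖m‖ ≠ 0 := norm_ne_zero_iff.2 hm
    exact ⟨‖m‖⁻¹ • m, by rw [norm_smul, norm_inv, norm_norm, inv_mul_cancel₀ hnorm],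
      (smul_inv_smul₀ hnorm m).symm⟩

theorem exists_foliatedSchwarz_of_forall_polarize_eq (hN : N ≠ 0) (hu : Continuous u)
    (h : ∀ e : Euc N, ‖e‖ = 1 →
      (∀ x, polarize N e u x = u x) ∨ ∀ x, polarize N e u x = u (reflect N e x)) :
    ∃ p : Euc N, ‖p‖ = 1 ∧ FoliatedSchwarz N p u := by
  have : NeZero N := ⟨hN⟩
  obtain ⟨p, hp, hm⟩ := exists_norm_eq_one_and_eq_norm_smul (truncatedMoment N u)
  refine ⟨p, hp, foliatedSchwarz_of_monotone_inner hp fun x y hxy hle =>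
    le_of_inner_le_of_forall_reflect_le (fun e he hpe x hx => ?_) hxy hle⟩
  refine reflect_le_of_inner_truncatedMoment_nonneg he hu (h e he) ?_ hx
  rw [hm, real_inner_smul_left]
  positivity

end FoliatedSchwarz

section Kernel

variable {N : ℕ} {e x y : Euc N} {s : ℝ}

lemma kern_nonneg (s : ℝ) (x y : Euc N) : 0 ≤ kern N s x y := by
  unfold kern
  positivity

lemma kern_pos (s : ℝ) (hxy : x ≠ y) : 0 < kern N s x y :=
  Real.rpow_pos_of_pos (norm_pos_iff.2 (sub_ne_zero.2 hxy)) _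

lemma kern_reflect_reflect (he : ‖e‖ = 1) (s : ℝ) (x y : Euc N) :
    kern N s (reflect N e x) (reflect N e y) = kern N s x y := by
  rw [kern, norm_reflect_sub_reflect he, kern]

lemma kern_reflect_left (he : ‖e‖ = 1) (s : ℝ) (x y : Euc N) :
    kern N s (reflect N e x) y = kern N s x (reflect N e y) := by
  rw [← kern_reflect_reflect he, reflect_reflect he]

lemma measurable_kern (s : ℝ) : Measurable fun q : Euc N × Euc N => kern N s q.1 q.2 := by
  unfold kern
  fun_prop

lemma kern_le_kern_reflect (he : ‖e‖ = 1) (hs : 0 < s) (hx : 0 ≤ inner ℝ x e)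
    (hy : 0 ≤ inner ℝ y e) : kern N s x y ≤ kern N s x (reflect N e y) := by
  refine Real.rpow_le_rpow (norm_nonneg _) (le_of_sq_le_sq ?_ (norm_nonneg _)) (by positivity)
  rw [norm_sub_reflect_sq he]
  exact le_add_of_nonneg_right (by positivity)

lemma kern_lt_kern_reflect (he : ‖e‖ = 1) (hs : 0 < s) (hx : 0 < inner ℝ x e)
    (hy : 0 < inner ℝ y e) : kern N s x y < kern N s x (reflect N e y) := by
  refine Real.rpow_lt_rpow (norm_nonneg _) (lt_of_pow_lt_pow_left₀ 2 (norm_nonneg _) ?_)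
    (by positivity)
  rw [norm_sub_reflect_sq he]
  exact lt_add_of_pos_right _ (by positivity)

lemma cNs_pos (N : ℕ) (hs : s ∈ Ioo (0 : ℝ) 1) : 0 < cNs N s := by
  have hs0 : 0 < s := hs.1
  have hΓ : 0 < Real.Gamma (1 - s) := Real.Gamma_pos_of_pos (sub_pos.2 hs.2)
  unfold cNs
  positivity

end Kernel

section EnergySpace

variable {N : ℕ} {e : Euc N} {s : ℝ} {Ω : Set (Euc N)} {u v w : Euc N → ℝ}

/-- The difference quotient `(u x - u y) / |x - y| ^ (N / 2 + s)`, so that `bform` and `semiSq` are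
the scalar product and the squared norm of difference quotients in `L²` of `reg N Ω`. It vanishes
on the diagonal, where the division is by zero. -/
def diffQuot (N : ℕ) (s : ℝ) (u : Euc N → ℝ) (q : Euc N × Euc N) : ℝ :=
  (u q.1 - u q.2) / √(kern N s q.1 q.2)

lemma diffQuot_mul_diffQuot (u v : Euc N → ℝ) (q : Euc N × Euc N) :
    diffQuot N s u q * diffQuot N s v q =
      (u q.1 - u q.2) * (v q.1 - v q.2) / kern N s q.1 q.2 := by
  rw [diffQuot, diffQuot, div_mul_div_comm, Real.mul_self_sqrt (kern_nonneg s _ _)]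

lemma diffQuot_sq (u : Euc N → ℝ) (q : Euc N × Euc N) :
    diffQuot N s u q ^ 2 = (u q.1 - u q.2) ^ 2 / kern N s q.1 q.2 := by
  rw [sq, diffQuot_mul_diffQuot, sq]

lemma diffQuot_sub (u v : Euc N → ℝ) :
    diffQuot N s (u - v) = diffQuot N s u - diffQuot N s v := by
  ext q
  simp only [diffQuot, Pi.sub_apply]
  ring

lemma diffQuot_const_smul (c : ℝ) (u : Euc N → ℝ) :
    diffQuot N s (c • u) = c • diffQuot N s u := by
  ext q
  simp only [diffQuot, Pi.smul_apply, smul_eq_mul]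
  ring

lemma diffQuot_comp_reflect (he : ‖e‖ = 1) (u : Euc N → ℝ) :
    diffQuot N s (u ∘ reflect N e) =
      diffQuot N s u ∘ Prod.map (reflect N e) (reflect N e) := by
  ext q
  simp only [diffQuot, Function.comp_apply, Prod.map_fst, Prod.map_snd, kern_reflect_reflect he]

lemma measurable_diffQuot (s : ℝ) (hu : Measurable u) : Measurable (diffQuot N s u) := by
  have := measurable_kern (N := N) s
  unfold diffQuot
  fun_prop

lemma bform_eq_integral_diffQuot (u v : Euc N → ℝ) :
    bform N s Ω u v = ∫ q in reg N Ω, diffQuot N s u q * diffQuot N s v q := by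
  simp only [bform, diffQuot_mul_diffQuot]

lemma semiSq_eq_lintegral_diffQuot (u : Euc N → ℝ) :
    semiSq N s Ω u = ∫⁻ q in reg N Ω, ENNReal.ofReal (diffQuot N s u q ^ 2) := by
  simp only [semiSq, diffQuot_sq]

lemma bform_self (hu : Measurable u) : bform N s Ω u u = (semiSq N s Ω u).toReal := by
  simp only [bform_eq_integral_diffQuot, semiSq_eq_lintegral_diffQuot, ← sq]
  exact integral_eq_lintegral_of_nonneg_ae (ae_of_all _ fun _ => sq_nonneg _)
    ((measurable_diffQuot s hu).pow_const 2).aestronglyMeasurable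

lemma memHs_iff_memLp :
    memHs N s Ω u ↔ Measurable u ∧ MemLp u 2 (volume.restrict Ω) ∧
      MemLp (diffQuot N s u) 2 (volume.restrict (reg N Ω)) := by
  refine and_congr_right fun hu => and_congr ?_ ?_
  · exact lintegral_ofReal_sq_lt_top_iff_memLp hu.aestronglyMeasurable
  · rw [semiSq_eq_lintegral_diffQuot]
    exact lintegral_ofReal_sq_lt_top_iff_memLp (measurable_diffQuot s hu).aestronglyMeasurable

lemma memHs.sub (hu : memHs N s Ω u) (hv : memHs N s Ω v) : memHs N s Ω (u - v) := by
  rw [memHs_iff_memLp, diffQuot_sub] at *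
  exact ⟨hu.1.sub hv.1, hu.2.1.sub hv.2.1, hu.2.2.sub hv.2.2⟩

lemma memHs.const_smul (hu : memHs N s Ω u) (c : ℝ) : memHs N s Ω (c • u) := by
  rw [memHs_iff_memLp, diffQuot_const_smul] at *
  exact ⟨hu.1.const_smul c, hu.2.1.const_smul c, hu.2.2.const_smul c⟩

lemma bform_const_smul_const_smul (c : ℝ) (u : Euc N → ℝ) :
    bform N s Ω (c • u) (c • u) = c ^ 2 * bform N s Ω u u := by
  simp only [bform_eq_integral_diffQuot, diffQuot_const_smul, ← integral_const_mul]
  congr with q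
  simp only [Pi.smul_apply, smul_eq_mul]
  ring

lemma bform_sub_left (hu : memHs N s Ω u) (hv : memHs N s Ω v) (hw : memHs N s Ω w) :
    bform N s Ω (u - v) w = bform N s Ω u w - bform N s Ω v w := by
  rw [memHs_iff_memLp] at hu hv hw
  simp only [bform_eq_integral_diffQuot, diffQuot_sub, Pi.sub_apply, sub_mul]
  exact integral_sub (hu.2.2.integrable_mul hw.2.2) (hv.2.2.integrable_mul hw.2.2)

lemma eq_of_bform_self_eq_zero (hΩ : IsOpen Ω) (hw : memHs N s Ω w) (hwc : Continuous w)
    (h : bform N s Ω w w = 0) {x : Euc N} (hx : x ∈ Ω) (y : Euc N) : w x = w y := by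
  by_contra hne
  have hintegrable : Integrable (fun q => diffQuot N s w q ^ 2) (volume.restrict (reg N Ω)) :=
    (memHs_iff_memLp.1 hw).2.2.integrable_sq
  have hae : (fun q => diffQuot N s w q ^ 2) =ᵐ[volume.restrict (reg N Ω)] 0 := by
    rw [← integral_eq_zero_iff_of_nonneg (fun _ => sq_nonneg _) hintegrable, ← h,
      bform_eq_integral_diffQuot]
    simp only [sq]
  let U : Set (Euc N × Euc N) := {q | q.1 ∈ Ω ∧ w q.1 ≠ w q.2}
  have hU : IsOpen U := (hΩ.preimage continuous_fst).inter
    (isOpen_ne_fun (hwc.comp continuous_fst) (hwc.comp continuous_snd))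
  obtain ⟨q, ⟨-, hq⟩, hq0 : diffQuot N s w q ^ 2 = 0⟩ :=
    exists_mem_of_ae_restrict_of_isOpen hU ⟨(x, y), hx, hne⟩
      (fun q hq => Or.inl (subset_closure hq.1)) hae
  have hkern : 0 < kern N s q.1 q.2 := kern_pos s (ne_of_apply_ne w hq)
  rw [diffQuot_sq, div_eq_zero_iff, or_iff_left hkern.ne'] at hq0
  exact hq (sub_eq_zero.1 (pow_eq_zero_iff two_ne_zero |>.1 hq0))

lemma measurableSet_reg (N : ℕ) (Ω : Set (Euc N)) : MeasurableSet (reg N Ω) :=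
  (isClosed_closure.measurableSet.preimage measurable_fst).union
    (isClosed_closure.measurableSet.preimage measurable_snd)

lemma measurePreserving_prodMap_restrict_reg {f g : Euc N → Euc N} (hf : MeasurePreserving f)
    (hg : MeasurePreserving g) (hfΩ : f ⁻¹' closure Ω = closure Ω)
    (hgΩ : g ⁻¹' closure Ω = closure Ω) :
    MeasurePreserving (Prod.map f g) (volume.restrict (reg N Ω)) (volume.restrict (reg N Ω)) := by
  have hreg : Prod.map f g ⁻¹' reg N Ω = reg N Ω := by
    ext q
    exact or_congr (Set.ext_iff.1 hfΩ q.1) (Set.ext_iff.1 hgΩ q.2)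
  have hpre := (hf.prod hg).restrict_preimage (measurableSet_reg N Ω)
  rwa [hreg] at hpre

lemma measurePreserving_prodMap_reflect_restrict_reg (he : ‖e‖ = 1)
    (hΩ : reflect N e ⁻¹' Ω = Ω) :
    MeasurePreserving (Prod.map (reflect N e) (reflect N e)) (volume.restrict (reg N Ω))
      (volume.restrict (reg N Ω)) :=
  measurePreserving_prodMap_restrict_reg (measurePreserving_reflect he)
    (measurePreserving_reflect he) (preimage_reflect_closure he hΩ) (preimage_reflect_closure he hΩ)

lemma memHs.comp_reflect (he : ‖e‖ = 1) (hΩ : reflect N e ⁻¹' Ω = Ω) (hu : memHs N s Ω u) :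
    memHs N s Ω (u ∘ reflect N e) := by
  rw [memHs_iff_memLp, diffQuot_comp_reflect he] at *
  exact ⟨hu.1.comp (continuous_reflect e).measurable,
    hu.2.1.comp_measurePreserving (measurePreserving_reflect_restrict he hΩ),
    hu.2.2.comp_measurePreserving (measurePreserving_prodMap_reflect_restrict_reg he hΩ)⟩

lemma bform_comp_reflect (he : ‖e‖ = 1) (hΩ : reflect N e ⁻¹' Ω = Ω) (u v : Euc N → ℝ) :
    bform N s Ω (u ∘ reflect N e) (v ∘ reflect N e) = bform N s Ω u v := by
  simp only [bform_eq_integral_diffQuot, diffQuot_comp_reflect he]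
  exact (measurePreserving_prodMap_reflect_restrict_reg he hΩ).integral_comp
    ((measurableEmbedding_reflect he).prodMap (measurableEmbedding_reflect he))
    fun q => diffQuot N s u q * diffQuot N s v q

end EnergySpace

section PolarizationEnergy

/- The sum of the two brackets is invariant under rearrangement, while the first one decreases by
`2 * (b - a) * (c - d)` when the pairs `(a, b)` and `(c, d)` are oppositely ordered. -/
lemma weighted_sq_sub_min_max_le {i j : ℝ} (hij : j ≤ i) (a b c d : ℝ) :
    i * ((min a b - min c d) ^ 2 + (max a b - max c d) ^ 2) +
        j * ((min a b - max c d) ^ 2 + (max a b - min c d) ^ 2) ≤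
      i * ((a - c) ^ 2 + (b - d) ^ 2) + j * ((a - d) ^ 2 + (b - c) ^ 2) := by
  rcases le_total a b with hab | hab <;> rcases le_total c d with hcd | hcd <;>
    simp only [hab, hcd, min_eq_left, min_eq_right, max_eq_left, max_eq_right] <;>
    nlinarith [mul_nonneg (mul_nonneg (sub_nonneg.2 hab) (sub_nonneg.2 hcd)) (sub_nonneg.2 hij)]

lemma weighted_sq_sub_min_max_lt {i j a b c d : ℝ} (hij : j < i) (hab : a < b) (hdc : d < c) :
    i * ((min a b - min c d) ^ 2 + (max a b - max c d) ^ 2) +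
        j * ((min a b - max c d) ^ 2 + (max a b - min c d) ^ 2) <
      i * ((a - c) ^ 2 + (b - d) ^ 2) + j * ((a - d) ^ 2 + (b - c) ^ 2) := by
  rw [min_eq_left hab.le, max_eq_right hab.le, min_eq_right hdc.le, max_eq_left hdc.le]
  nlinarith [mul_pos (mul_pos (sub_pos.2 hab) (sub_pos.2 hdc)) (sub_pos.2 hij)]

variable {N : ℕ} {e x y : Euc N} {s : ℝ} {Ω : Set (Euc N)} {u : Euc N → ℝ}

/-- The energy density of `u` summed over the orbit of `(x, y)` under reflecting either variable.
Polarization does not increase it pointwise, unlike the energy density itself. -/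
def fourPoint (N : ℕ) (s : ℝ) (e : Euc N) (u : Euc N → ℝ) (x y : Euc N) : ℝ :=
  diffQuot N s u (x, y) ^ 2 + diffQuot N s u (reflect N e x, reflect N e y) ^ 2 +
    (diffQuot N s u (x, reflect N e y) ^ 2 + diffQuot N s u (reflect N e x, y) ^ 2)

lemma fourPoint_eq (he : ‖e‖ = 1) (s : ℝ) (u : Euc N → ℝ) (x y : Euc N) :
    fourPoint N s e u x y =
      (kern N s x y)⁻¹ * ((u x - u y) ^ 2 + (u (reflect N e x) - u (reflect N e y)) ^ 2) +
        (kern N s x (reflect N e y))⁻¹ *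
          ((u x - u (reflect N e y)) ^ 2 + (u (reflect N e x) - u y) ^ 2) := by
  simp only [fourPoint, diffQuot_sq, kern_reflect_reflect he, kern_reflect_left he]
  ring

lemma fourPoint_nonneg (s : ℝ) (e : Euc N) (u : Euc N → ℝ) (x y : Euc N) :
    0 ≤ fourPoint N s e u x y := by
  unfold fourPoint
  positivity

lemma fourPoint_reflect_left (he : ‖e‖ = 1) (s : ℝ) (u : Euc N → ℝ) (x y : Euc N) :
    fourPoint N s e u (reflect N e x) y = fourPoint N s e u x y := by
  simp only [fourPoint, reflect_reflect he]
  ring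

lemma fourPoint_reflect_right (he : ‖e‖ = 1) (s : ℝ) (u : Euc N → ℝ) (x y : Euc N) :
    fourPoint N s e u x (reflect N e y) = fourPoint N s e u x y := by
  simp only [fourPoint, reflect_reflect he]
  ring

lemma measurable_fourPoint (s : ℝ) (e : Euc N) (hu : Measurable u) :
    Measurable fun q : Euc N × Euc N => fourPoint N s e u q.1 q.2 := by
  have hd := measurable_diffQuot s hu
  have hσ := (continuous_reflect e).measurable
  unfold fourPoint
  fun_prop

lemma fourPoint_polarize (he : ‖e‖ = 1) (s : ℝ) (u : Euc N → ℝ) (hx : 0 ≤ inner ℝ x e)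
    (hy : 0 ≤ inner ℝ y e) :
    fourPoint N s e (polarize N e u) x y =
      (kern N s x y)⁻¹ * ((min (u x) (u (reflect N e x)) - min (u y) (u (reflect N e y))) ^ 2 +
          (max (u x) (u (reflect N e x)) - max (u y) (u (reflect N e y))) ^ 2) +
        (kern N s x (reflect N e y))⁻¹ *
          ((min (u x) (u (reflect N e x)) - max (u y) (u (reflect N e y))) ^ 2 +
            (max (u x) (u (reflect N e x)) - min (u y) (u (reflect N e y))) ^ 2) := by
  rw [fourPoint_eq he, polarize_of_inner_nonneg hx, polarize_of_inner_nonneg hy,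
    polarize_reflect_of_inner_nonneg he hx, polarize_reflect_of_inner_nonneg he hy]

lemma fourPoint_polarize_self (he : ‖e‖ = 1) (s : ℝ) (u : Euc N → ℝ) (x : Euc N) :
    fourPoint N s e (polarize N e u) x x = fourPoint N s e u x x := by
  rw [fourPoint_eq he, fourPoint_eq he]
  rcases polarize_eq_or_swap he u x with h | h <;> rw [h.1, h.2]
  ring

lemma fourPoint_polarize_le (he : ‖e‖ = 1) (hs : 0 < s) (u : Euc N → ℝ) (x y : Euc N) :
    fourPoint N s e (polarize N e u) x y ≤ fourPoint N s e u x y := by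
  suffices hhalf : ∀ x, 0 ≤ inner ℝ x e → ∀ y, 0 ≤ inner ℝ y e →
      fourPoint N s e (polarize N e u) x y ≤ fourPoint N s e u x y by
    have hright (x : Euc N) (hx : 0 ≤ inner ℝ x e) (y : Euc N) :
        fourPoint N s e (polarize N e u) x y ≤ fourPoint N s e u x y :=
      forall_of_forall_inner_nonneg he (hhalf x hx)
        (fun y hy => by simpa only [fourPoint_reflect_right he] using hhalf x hx y hy) y
    exact forall_of_forall_inner_nonneg he (fun x hx => hright x hx y)
      (fun x hx => by simpa only [fourPoint_reflect_left he] using hright x hx y) x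
  intro x hx y hy
  rcases eq_or_ne x y with rfl | hxy
  · exact (fourPoint_polarize_self he s u x).le
  · rw [fourPoint_polarize he s u hx hy, fourPoint_eq he]
    exact weighted_sq_sub_min_max_le
      (inv_anti₀ (kern_pos s hxy) (kern_le_kern_reflect he hs hx hy)) _ _ _ _

lemma fourPoint_polarize_lt (he : ‖e‖ = 1) (hs : 0 < s) (hx : 0 < inner ℝ x e)
    (hy : 0 < inner ℝ y e) (hux : u x < u (reflect N e x)) (huy : u (reflect N e y) < u y) :
    fourPoint N s e (polarize N e u) x y < fourPoint N s e u x y := by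
  have hxy : x ≠ y := by
    rintro rfl
    exact hux.not_gt huy
  rw [fourPoint_polarize he s u hx.le hy.le, fourPoint_eq he]
  exact weighted_sq_sub_min_max_lt
    (inv_strictAnti₀ (kern_pos s hxy) (kern_lt_kern_reflect he hs hx hy)) hux huy

lemma lintegral_fourPoint (he : ‖e‖ = 1) (hΩ : reflect N e ⁻¹' Ω = Ω) (hu : Measurable u) :
    ∫⁻ q in reg N Ω, ENNReal.ofReal (fourPoint N s e u q.1 q.2) = 4 * semiSq N s Ω u := by
  let F (q : Euc N × Euc N) : ℝ≥0∞ := ENNReal.ofReal (diffQuot N s u q ^ 2)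
  have hF : Measurable F := ((measurable_diffQuot s hu).pow_const 2).ennreal_ofReal
  have hcomp {f g : Euc N → Euc N} (hf : MeasurePreserving f) (hg : MeasurePreserving g)
      (hfΩ : f ⁻¹' closure Ω = closure Ω) (hgΩ : g ⁻¹' closure Ω = closure Ω) :
      ∫⁻ q in reg N Ω, F (f q.1, g q.2) = semiSq N s Ω u :=
    ((measurePreserving_prodMap_restrict_reg hf hg hfΩ hgΩ).lintegral_comp hF).trans
      (semiSq_eq_lintegral_diffQuot u).symm
  have hσ := measurePreserving_reflect he
  have hσΩ := preimage_reflect_closure he hΩ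
  have hid : MeasurePreserving (id : Euc N → Euc N) := MeasurePreserving.id volume
  have hσm := (continuous_reflect e).measurable
  have hsplit (q : Euc N × Euc N) : ENNReal.ofReal (fourPoint N s e u q.1 q.2) =
      F (id q.1, id q.2) + F (reflect N e q.1, reflect N e q.2) +
        (F (id q.1, reflect N e q.2) + F (reflect N e q.1, id q.2)) := by
    simp only [F, id, fourPoint]
    rw [ENNReal.ofReal_add (by positivity) (by positivity),
      ENNReal.ofReal_add (by positivity) (by positivity),
      ENNReal.ofReal_add (by positivity) (by positivity)]
  simp only [hsplit]
  rw [lintegral_add_left (by fun_prop), lintegral_add_left (by fun_prop),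
    lintegral_add_left (by fun_prop), hcomp hid hid rfl rfl, hcomp hσ hσ hσΩ hσΩ,
    hcomp hid hσ rfl hσΩ, hcomp hσ hid hσΩ rfl]
  ring

lemma semiSq_polarize_le (he : ‖e‖ = 1) (hs : 0 < s) (hΩ : reflect N e ⁻¹' Ω = Ω)
    (hu : Measurable u) : semiSq N s Ω (polarize N e u) ≤ semiSq N s Ω u := by
  have h4 : 4 * semiSq N s Ω (polarize N e u) ≤ 4 * semiSq N s Ω u := by
    rw [← lintegral_fourPoint he hΩ hu, ← lintegral_fourPoint he hΩ (measurable_polarize e hu)]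
    exact lintegral_mono fun q => ENNReal.ofReal_le_ofReal (fourPoint_polarize_le he hs u _ _)
  exact (ENNReal.mul_le_mul_iff_right (by norm_num) (by norm_num)).1 h4

lemma memHs.polarize (he : ‖e‖ = 1) (hs : 0 < s) (hΩ : reflect N e ⁻¹' Ω = Ω)
    (hu : memHs N s Ω u) : memHs N s Ω (polarize N e u) := by
  have hPu := measurable_polarize e hu.1
  refine ⟨hPu, ?_, (semiSq_polarize_le he hs hΩ hu.1).trans_lt hu.2.2⟩
  have hsq : IntegrableOn (fun x => u x ^ 2) Ω := (memHs_iff_memLp.1 hu).2.1.integrable_sq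
  exact (lintegral_ofReal_sq_lt_top_iff_memLp hPu.aestronglyMeasurable).2 <|
    (memLp_two_iff_integrable_sq hPu.aestronglyMeasurable).2 <|
      integrableOn_comp_polarize he hΩ hu.1 (measurable_id.pow_const 2) hsq

lemma fourPoint_polarize_ae_eq (he : ‖e‖ = 1) (hs : 0 < s) (hΩ : reflect N e ⁻¹' Ω = Ω)
    (hu : Measurable u) (hfin : semiSq N s Ω u ≠ ⊤)
    (hE : semiSq N s Ω u ≤ semiSq N s Ω (polarize N e u)) :
    ∀ᵐ q ∂volume.restrict (reg N Ω),
      fourPoint N s e (polarize N e u) q.1 q.2 = fourPoint N s e u q.1 q.2 := by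
  have hPu := measurable_polarize e hu
  have hae : (fun q => ENNReal.ofReal (fourPoint N s e (polarize N e u) q.1 q.2))
      =ᵐ[volume.restrict (reg N Ω)] fun q => ENNReal.ofReal (fourPoint N s e u q.1 q.2) := by
    refine ae_eq_of_ae_le_of_lintegral_le
      (ae_of_all _ fun q => ENNReal.ofReal_le_ofReal (fourPoint_polarize_le he hs u _ _)) ?_
      (measurable_fourPoint s e hu).ennreal_ofReal.aemeasurable ?_
    · rw [lintegral_fourPoint he hΩ hPu]
      exact ENNReal.mul_ne_top (by norm_num)
        ((semiSq_polarize_le he hs hΩ hu).trans_lt hfin.lt_top).ne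
    · rw [lintegral_fourPoint he hΩ hu, lintegral_fourPoint he hΩ hPu]
      gcongr
  filter_upwards [hae] with q hq
  exact (ENNReal.ofReal_eq_ofReal_iff (fourPoint_nonneg ..) (fourPoint_nonneg ..)).1 hq

lemma le_reflect_of_semiSq_le_semiSq_polarize (he : ‖e‖ = 1) (hs : 0 < s) (hΩo : IsOpen Ω)
    (hΩ : reflect N e ⁻¹' Ω = Ω) (hu : Continuous u) (hfin : semiSq N s Ω u ≠ ⊤)
    (hE : semiSq N s Ω u ≤ semiSq N s Ω (polarize N e u)) (hx : 0 < inner ℝ x e)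
    (hy : 0 < inner ℝ y e) (hxy : x ∈ Ω ∨ y ∈ Ω) (hux : u x < u (reflect N e x)) :
    u y ≤ u (reflect N e y) := by
  by_contra! huy
  have hσ := continuous_reflect e
  let U : Set (Euc N × Euc N) := {q | (q.1 ∈ Ω ∨ q.2 ∈ Ω) ∧ (0 < inner ℝ q.1 e ∧
    0 < inner ℝ q.2 e) ∧ u q.1 < u (reflect N e q.1) ∧ u (reflect N e q.2) < u q.2}
  have hU : IsOpen U := by
    refine ((hΩo.preimage continuous_fst).union (hΩo.preimage continuous_snd)).and
      (((isOpen_lt ?_ ?_).and (isOpen_lt ?_ ?_)).and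
        ((isOpen_lt ?_ ?_).and (isOpen_lt ?_ ?_))) <;> fun_prop
  obtain ⟨q, ⟨-, ⟨hq1, hq2⟩, hq3, hq4⟩, hq⟩ := exists_mem_of_ae_restrict_of_isOpen hU
    ⟨(x, y), hxy, ⟨hx, hy⟩, hux, huy⟩
    (fun q hq => hq.1.imp (fun h => subset_closure h) fun h => subset_closure h)
    (fourPoint_polarize_ae_eq he hs hΩ hu.measurable hfin hE)
  exact (fourPoint_polarize_lt he hs hq1 hq2 hq3 hq4).ne hq

end PolarizationEnergy

section FirstEigenfunction

variable {N : ℕ} {e : Euc N} {s : ℝ} {Ω : Set (Euc N)} {u v : Euc N → ℝ}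

lemma mu1_le_of_integral_sq_eq_one (hs : s ∈ Ioo (0 : ℝ) 1) (hv : memHs N s Ω v)
    (hmean : ∫ x in Ω, v x = 0) (hone : ∫ x in Ω, v x ^ 2 = 1) :
    mu1 N s Ω ≤ cNs N s / 2 * bform N s Ω v v := by
  refine csInf_le ⟨0, ?_⟩ ⟨v, hv, hone, hmean, by rw [bform_self hv.1]⟩
  rintro _ ⟨w, -, -, -, rfl⟩
  have := cNs_pos N hs
  positivity

lemma mu1_mul_integral_sq_le (hs : s ∈ Ioo (0 : ℝ) 1) (hv : memHs N s Ω v)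
    (hmean : ∫ x in Ω, v x = 0) :
    mu1 N s Ω * ∫ x in Ω, v x ^ 2 ≤ cNs N s / 2 * bform N s Ω v v := by
  set A := ∫ x in Ω, v x ^ 2 with hA
  have hA0 : 0 ≤ A := integral_nonneg fun _ => sq_nonneg _
  rcases hA0.eq_or_lt with hA0 | hApos
  · rw [← hA0, mul_zero, bform_self hv.1]
    have := cNs_pos N hs
    positivity
  have hc2 : (√A)⁻¹ ^ 2 = A⁻¹ := by rw [inv_pow, Real.sq_sqrt hApos.le]
  have hnormalized := mu1_le_of_integral_sq_eq_one hs (hv.const_smul (√A)⁻¹)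
    (by simp only [Pi.smul_apply, integral_smul, hmean, smul_zero])
    (by simp only [Pi.smul_apply, smul_eq_mul, mul_pow, integral_const_mul, ← hA, hc2,
      inv_mul_cancel₀ hApos.ne'])
  rw [bform_const_smul_const_smul, hc2] at hnormalized
  calc mu1 N s Ω * A ≤ cNs N s / 2 * (A⁻¹ * bform N s Ω v v) * A := by gcongr
    _ = cNs N s / 2 * bform N s Ω v v := by field_simp

lemma IsFirstEigen.semiSq_le_semiSq_polarize (hu : IsFirstEigen N s Ω u) (he : ‖e‖ = 1)
    (hs : s ∈ Ioo (0 : ℝ) 1) (hΩ : reflect N e ⁻¹' Ω = Ω) (hΩv : volume Ω ≠ ⊤) :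
    semiSq N s Ω u ≤ semiSq N s Ω (polarize N e u) := by
  obtain ⟨hmem, -, hmean, hweak⟩ := hu
  have hPmem : memHs N s Ω (polarize N e u) := hmem.polarize he hs.1 hΩ
  have hL2 : MemLp u 2 (volume.restrict Ω) := (memHs_iff_memLp.1 hmem).2.1
  have : IsFiniteMeasure (volume.restrict Ω) := isFiniteMeasure_restrict.2 hΩv
  have hPmean : ∫ x in Ω, polarize N e u x = 0 :=
    (setIntegral_comp_polarize he hΩ hmem.1 measurable_id
      (hL2.integrable one_le_two)).trans hmean
  have hPsq : ∫ x in Ω, polarize N e u x ^ 2 = ∫ x in Ω, u x ^ 2 :=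
    setIntegral_comp_polarize he hΩ hmem.1 (measurable_id.pow_const 2) hL2.integrable_sq
  have henergy : cNs N s / 2 * bform N s Ω u u ≤
      cNs N s / 2 * bform N s Ω (polarize N e u) (polarize N e u) := by
    calc cNs N s / 2 * bform N s Ω u u = mu1 N s Ω * ∫ x in Ω, polarize N e u x ^ 2 := by
          rw [hweak u hmem, hPsq]
          simp only [sq]
      _ ≤ _ := mu1_mul_integral_sq_le hs hPmem hPmean
  have hle := le_of_mul_le_mul_left henergy (half_pos (cNs_pos N hs))
  rw [bform_self hmem.1, bform_self hPmem.1] at hle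
  exact (ENNReal.toReal_le_toReal hmem.2.2.ne hPmem.2.2.ne).1 hle

lemma IsFirstEigen.bform_eq_zero (hu : IsFirstEigen N s Ω u) (hs : s ∈ Ioo (0 : ℝ) 1)
    (hv : memHs N s Ω v) (hv0 : ∀ x ∈ Ω, v x = 0) : bform N s Ω u v = 0 := by
  have hweak := hu.2.2.2 v hv
  rw [setIntegral_eq_zero_of_forall_eq_zero fun x hx => by rw [hv0 x hx, mul_zero],
    mul_zero] at hweak
  exact (mul_eq_zero.1 hweak).resolve_left (half_pos (cNs_pos N hs)).ne'

lemma IsFirstEigen.nonempty (hu : IsFirstEigen N s Ω u) : Ω.Nonempty := by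
  rw [nonempty_iff_ne_empty]
  rintro rfl
  exact hu.2.1 (by simp only [Measure.restrict_empty, ae_zero]; exact eventually_bot)

lemma IsFirstEigen.eq_reflect_of_forall_mem (hu : IsFirstEigen N s Ω u) (he : ‖e‖ = 1)
    (hs : s ∈ Ioo (0 : ℝ) 1) (hΩo : IsOpen Ω) (hΩ : reflect N e ⁻¹' Ω = Ω) (huc : Continuous u)
    (h : ∀ x ∈ Ω, u x = u (reflect N e x)) (y : Euc N) : u y = u (reflect N e y) := by
  have hσ := continuous_reflect e
  have hmem := hu.1.comp_reflect he hΩ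
  let w : Euc N → ℝ := u - u ∘ reflect N e
  have hw : memHs N s Ω w := hu.1.sub hmem
  have hw0 (x : Euc N) (hx : x ∈ Ω) : w x = 0 := sub_eq_zero.2 (h x hx)
  have hwσ0 (x : Euc N) (hx : x ∈ Ω) : (w ∘ reflect N e) x = 0 := hw0 _ (hΩ.ge hx)
  have hww : (w ∘ reflect N e) ∘ reflect N e = w := by
    ext x
    simp only [Function.comp_apply, reflect_reflect he]
  have henergy : bform N s Ω w w = 0 := by
    calc bform N s Ω w w = bform N s Ω u w - bform N s Ω (u ∘ reflect N e) w :=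
          bform_sub_left hu.1 hmem hw
      _ = bform N s Ω u w - bform N s Ω u (w ∘ reflect N e) := by
          rw [← bform_comp_reflect he hΩ u (w ∘ reflect N e), hww]
      _ = 0 := by
          rw [hu.bform_eq_zero hs hw hw0, hu.bform_eq_zero hs (hw.comp_reflect he hΩ) hwσ0,
            sub_zero]
  obtain ⟨x, hx⟩ := hu.nonempty
  have hconst := eq_of_bform_self_eq_zero hΩo hw (huc.sub (huc.comp hσ)) henergy hx y
  exact sub_eq_zero.1 (hconst.symm.trans (hw0 x hx))

theorem IsFirstEigen.polarize_eq_or (hu : IsFirstEigen N s Ω u) (he : ‖e‖ = 1)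
    (hs : s ∈ Ioo (0 : ℝ) 1) (hΩo : IsOpen Ω) (hΩ : reflect N e ⁻¹' Ω = Ω) (hΩv : volume Ω ≠ ⊤)
    (huc : Continuous u) :
    (∀ x, polarize N e u x = u x) ∨ ∀ x, polarize N e u x = u (reflect N e x) := by
  rw [polarize_eq_self_iff he, polarize_eq_comp_reflect_iff he]
  have hcompare {x y : Euc N} := le_reflect_of_semiSq_le_semiSq_polarize (x := x) (y := y) he hs.1
    hΩo hΩ huc hu.1.2.2.ne (hu.semiSq_le_semiSq_polarize he hs hΩ hΩv)
  by_cases hsymm : ∃ x ∈ Ω, 0 < inner ℝ x e ∧ u x ≠ u (reflect N e x)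
  · obtain ⟨x, hxΩ, hx, hne⟩ := hsymm
    rcases hne.lt_or_gt with hlt | hgt
    · refine Or.inl fun y hy => ?_
      rcases hy.eq_or_lt with hy0 | hypos
      · rw [reflect_of_inner_eq_zero hy0.symm]
      · exact hcompare hx hypos (Or.inl hxΩ) hlt
    · refine Or.inr fun y hy => ?_
      rcases hy.eq_or_lt with hy0 | hypos
      · rw [reflect_of_inner_eq_zero hy0.symm]
      · exact not_lt.1 fun hlt => (hcompare hypos hx (Or.inr hxΩ) hlt).not_gt hgt
  · push Not at hsymm
    refine Or.inl fun y _ => (hu.eq_reflect_of_forall_mem he hs hΩo hΩ huc ?_ y).le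
    have heq (x : Euc N) (hx : 0 ≤ inner ℝ x e) (hxΩ : x ∈ Ω) : u x = u (reflect N e x) := by
      rcases hx.eq_or_lt with hx0 | hxpos
      · rw [reflect_of_inner_eq_zero hx0.symm]
      · exact hsymm x hxΩ hxpos
    refine forall_of_forall_inner_nonneg he heq fun x hx hxΩ => ?_
    rw [reflect_reflect he]
    exact (heq x hx (hΩ.le hxΩ)).symm

end FirstEigenfunction

theorem statement15_general {N : ℕ} (hN : N ≠ 0) {s : ℝ} (hs : s ∈ Ioo (0 : ℝ) 1)
    {Ω : Set (Euc N)} (hΩo : IsOpen Ω) (hΩv : volume Ω ≠ ⊤)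
    (hΩ : ∀ x ∈ Ω, ∀ y, ‖y‖ = ‖x‖ → y ∈ Ω) {u : Euc N → ℝ} (hu : IsFirstEigen N s Ω u)
    (huc : Continuous u) :
    (∀ e : Euc N, ‖e‖ = 1 →
      ((∀ x, polarize N e u x = u x) ∨ ∀ x, polarize N e u x = u (reflect N e x))) ∧
    ∃ p : Euc N, ‖p‖ = 1 ∧ FoliatedSchwarz N p u := by
  have hpol (e : Euc N) (he : ‖e‖ = 1) :=
    hu.polarize_eq_or he hs hΩo (preimage_reflect_eq_of_radial he hΩ) hΩv huc
  exact ⟨hpol, exists_foliatedSchwarz_of_forall_polarize_eq hN huc hpol⟩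

/-- Corollary 4.4: a continuous first nontrivial eigenfunction in a ball
coincides with each of its polarizations (or with the polarization of its reflection), and is
foliated Schwarz symmetric with respect to some direction `p`. -/
theorem statement15 (N : ℕ) (hN : 2 ≤ N) (s : ℝ) (hs : s ∈ Set.Ioo (0 : ℝ) 1)
    (R : ℝ) (hR : 0 < R) (B : Set (Euc N)) (hB : B = Metric.ball (0 : Euc N) R)
    (u : Euc N → ℝ) (hu : IsFirstEigen N s B u) (hc : Continuous u) :
    (∀ e : Euc N, ‖e‖ = 1 →
      ((∀ x : Euc N, polarize N e u x = u x) ∨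
        (∀ x : Euc N, polarize N e u x = u (reflect N e x)))) ∧
    (∃ p : Euc N, ‖p‖ = 1 ∧ FoliatedSchwarz N p u) := by
  subst hB
  exact statement15_general (by omega) hs Metric.isOpen_ball measure_ball_lt_top.ne
    (fun x hx y hxy => by rwa [mem_ball_zero_iff, hxy, ← mem_ball_zero_iff]) hu hc

end FracNeumann
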